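/- Let R be a reduced elliptic root system of rank l with fundamental-set Π ∪ {a}. Then for each α ∈ Π there exist a unique positive integer k(α) and a unique g(α) ∈ {∅, 2ℤ+1} such that R ∩ (ℝα ⊕ ℝa) = ⋃_{ε∈{1,−1}} ((εα + ℤk(α)a) ∪ (2εα + g(α)k(α)a)), where the set 2εα + g(α)k(α)a is empty if g(α) = ∅ and equals {2εα + mk(α)a : m an odd integer} if g(α) = 2ℤ+1. -/

import Mathlib

/- ## Preliminaries: extended affine root systems (Saito) -/

noncomputable section

open Set

/-- The reflection `s_v : z ↦ z - (v^∨, z) v = z - (2 (v,z)/(v,v)) v` associated to a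
bilinear form `B` and a vector `v`.  (When `B v v = 0` this is the identity, by the
`division by zero = 0` convention; reflections are only ever used at non-isotropic `v`.) -/
def srefl {V : Type*} [AddCommGroup V] [Module ℝ V]
    (B : LinearMap.BilinForm ℝ V) (v : V) : Module.End ℝ V :=
  LinearMap.id - (((2 * (B v v)⁻¹) • (B v)).smulRight v)

/-- The Weyl group `W_S` generated by the reflections in the elements of `S`
(realized as the multiplicative closure; each generator is an involution, so this
agrees with the generated group). -/
def weyl {V : Type*} [AddCommGroup V] [Module ℝ V]
    (B : LinearMap.BilinForm ℝ V) (S : Set V) : Submonoid (Module.End ℝ V) :=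
  Submonoid.closure (srefl B '' S)

/-- The orbit `W_S · α`. -/
def worbit {V : Type*} [AddCommGroup V] [Module ℝ V]
    (B : LinearMap.BilinForm ℝ V) (S : Set V) (α : V) : Set V :=
  {v | ∃ w ∈ weyl B S, w α = v}

/-- `V⁰`, the set of isotropic vectors. -/
def nullSet {V : Type*} [AddCommGroup V] [Module ℝ V]
    (B : LinearMap.BilinForm ℝ V) : Set V := {v | B v v = 0}

/-- `ℤR`, the subgroup of `V` generated by `R`. -/
def zspan {V : Type*} [AddCommGroup V] (R : Set V) : AddSubgroup V :=
  AddSubgroup.closure R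

/-- `ℤ≥0 Π`, the set of nonnegative-integer linear combinations of elements of `Π`. -/
def nnspan {V : Type*} [AddCommMonoid V] (P : Set V) : Set V :=
  (AddSubmonoid.closure P : Set V)

/-- `(R, V)` is an `n`-extended affine root system of rank `l` (K. Saito). -/
structure IsEARS {V : Type*} [AddCommGroup V] [Module ℝ V]
    (B : LinearMap.BilinForm ℝ V) (R : Set V) (l n : ℕ) : Prop where
  rank_pos : 1 ≤ l
  findim : FiniteDimensional ℝ V
  symm : ∀ u v, B u v = B v u
  posSemidef : ∀ v, 0 ≤ B v v
  dim_eq : Module.finrank ℝ V = l + n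
  null_eq : nullSet B = (LinearMap.ker B : Set V)
  dim_null : Module.finrank ℝ (LinearMap.ker B) = n
  /-- (AX1), first half -/
  root_nonisotropic : ∀ α ∈ R, B α α ≠ 0
  /-- (AX1), second half -/
  span_eq_top : Submodule.span ℝ R = ⊤
  /-- (AX2) -/
  free : Module.Free ℤ (zspan R)
  /-- (AX2) -/
  rank_eq : Module.finrank ℤ (zspan R) = l + n
  /-- (AX3): `(α^∨, β) ∈ ℤ` -/
  integral : ∀ α ∈ R, ∀ β ∈ R, ∃ m : ℤ, 2 * B α β = (m : ℝ) * B α α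
  /-- (AX4) -/
  reflect : ∀ α ∈ R, srefl B α '' R = R
  /-- (AX5) -/
  connected : ∀ S' ⊆ R, S'.Nonempty → S' ≠ R → ∃ x ∈ S', ∃ y ∈ R \ S', B x y ≠ 0

/-- `R` is reduced, i.e. `R ∩ 2R = ∅`. -/
def IsReducedRS {V : Type*} [AddCommGroup V] [Module ℝ V] (R : Set V) : Prop :=
  ∀ α ∈ R, (2 : ℤ) • α ∉ R

/-- `Π₀` is a base (with `m` elements) of the root system `R₀`:
`Π₀ ⊆ R₀`, `Π₀` consists of `m` linearly independent elements, and
`R₀ = (R₀ ∩ ℤ≥0 Π₀) ∪ (R₀ ∩ ℤ≤0 Π₀)`. -/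
def IsBaseSet {M : Type*} [AddCommGroup M] [Module ℝ M] (R₀ P₀ : Set M) (m : ℕ) : Prop :=
  P₀ ⊆ R₀ ∧ P₀.Finite ∧ P₀.ncard = m ∧
  LinearIndependent ℝ ((↑) : P₀ → M) ∧
  R₀ = (R₀ ∩ nnspan P₀) ∪ (R₀ ∩ (-(nnspan P₀)))

/-- The bilinear form induced on a quotient `V ⧸ W` by a form vanishing on `W`. -/
def quotForm {V : Type*} [AddCommGroup V] [Module ℝ V]
    (W : Submodule ℝ V) (B : LinearMap.BilinForm ℝ V)
    (h1 : ∀ w ∈ W, B w = 0) (h2 : ∀ v : V, ∀ w ∈ W, B v w = 0) :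
    LinearMap.BilinForm ℝ (V ⧸ W) :=
  Submodule.liftQ W
    { toFun := fun v => Submodule.liftQ W (B v) (fun w hw => LinearMap.mem_ker.mpr (h2 v w hw))
      map_add' := fun u v => by
        ext x
        simp
      map_smul' := fun c v => by
        ext x
        simp }
    (fun w hw => by
      simp only [LinearMap.mem_ker]
      ext x
      simp [h1 w hw])

end

/-- A fundamental-set `Π ∪ {a}` of a reduced elliptic root system `R` of rank `l`:
(FS1) `a ∈ (ℤR)⁰` and `(ℤR)⁰ = ℤa ⊕ ℤb` for some `b`;
(FS2) `|Π| = l+1`, `Π ⊆ R` and `π_a(Π)` is a base of the affine root system `π_a(R)`. -/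
def IsFundamentalSet {V : Type*} [AddCommGroup V] [Module ℝ V]
    (B : LinearMap.BilinForm ℝ V) (R : Set V) (l : ℕ) (P : Set V) (a : V) : Prop :=
  a ∈ zspan R ∧ B a a = 0 ∧
  (∃ b : V, b ∈ zspan R ∧ B b b = 0 ∧
    ((zspan R : Set V) ∩ nullSet B = {v | ∃ m n : ℤ, v = m • a + n • b}) ∧
    (∀ m n : ℤ, m • a + n • b = 0 → m = 0 ∧ n = 0)) ∧
  P ⊆ R ∧ P.Finite ∧ P.ncard = l + 1 ∧
  IsBaseSet ((Submodule.span ℝ {a}).mkQ '' R) ((Submodule.span ℝ {a}).mkQ '' P) (l + 1)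

/-- The subset `⋃_{ε=±1} ((εα + ℤ kα a) ∪ (2εα + gα·kα a))` of the plane `ℝα ⊕ ℝa`;
here `gα : Bool`, with `false` encoding `g(α) = ∅` and `true` encoding `g(α) = 2ℤ+1`. -/
def kgLine {V : Type*} [AddCommGroup V] (a α : V) (kα : ℕ) (gα : Bool) : Set V :=
  {v | ∃ ε m : ℤ, (ε = 1 ∨ ε = -1) ∧ v = ε • α + (m * kα) • a} ∪
  {v | gα = true ∧ ∃ ε m : ℤ, (ε = 1 ∨ ε = -1) ∧ Odd m ∧ v = (2 * ε) • α + (m * kα) • a}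

/-- `k : Π → ℕ` and `g : Π → {∅, 2ℤ+1}` are the maps associated to the fundamental-set
`Π ∪ {a}`, i.e. `R ∩ (ℝα ⊕ ℝa) = ⋃_{ε=±1} ((εα + ℤ k(α) a) ∪ (2εα + g(α)k(α)a))`. -/
def IsKG {V : Type*} [AddCommGroup V] [Module ℝ V]
    (R : Set V) (a : V) (P : Set V) (k : V → ℕ) (g : V → Bool) : Prop :=
  ∀ α ∈ P, 0 < k α ∧
    R ∩ (Submodule.span ℝ {α, a} : Set V) = kgLine a α (k α) (g α)

/-- `c(α) = 1` if `g(α) = ∅`, `c(α) = 2` if `g(α) = 2ℤ+1`. -/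
def cMap {V : Type*} (g : V → Bool) (α : V) : ℕ := if g α then 2 else 1

/-- `α* := c(α)·α + k(α)·a`. -/
def starMap {V : Type*} [AddCommGroup V] (a : V) (k : V → ℕ) (g : V → Bool) (α : V) : V :=
  (cMap g α : ℤ) • α + (k α : ℤ) • a

/-- `B₊ := {α, α* | α ∈ Π}`. -/
def bplus {V : Type*} [AddCommGroup V] (a : V) (P : Set V) (k : V → ℕ) (g : V → Bool) :
    Set V :=
  P ∪ (starMap a k g '' P)

/-- `B := B₊ ∪ (−B₊)`. -/
def bfull {V : Type*} [AddCommGroup V] (a : V) (P : Set V) (k : V → ℕ) (g : V → Bool) :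
    Set V :=
  bplus a P k g ∪ (-(bplus a P k g))

/-- The set `R(Π,k,g) = ⋃_{w ∈ W_Π} ⋃_{α ∈ Π} ((w(α) + ℤk(α)a) ∪ (w(2α) + g(α)k(α)a))`. -/
def kgUnion {V : Type*} [AddCommGroup V] [Module ℝ V]
    (B : LinearMap.BilinForm ℝ V) (P : Set V) (a : V) (k : V → ℕ) (g : V → Bool) :
    Set V :=
  {v | ∃ w ∈ weyl B P, ∃ α ∈ P,
    (∃ m : ℤ, v = w α + (m * k α) • a) ∨
    (g α = true ∧ ∃ m : ℤ, Odd m ∧ v = w ((2 : ℤ) • α) + (m * k α) • a)}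

/-!
Modulo `a`, simple reflections carry every root of `π_a(R)` to a multiple of a simple root. So if
no root stayed a root after translation by a nonzero multiple of `a`, then `R` would lie in the
span of `Π`, whose dimension `l + 1` is less than `dim V = l + 2`. Hence some root has such a
translate and, since `R` is connected, every root does.

For `α ∈ Π`, the lattice condition (FS1) makes every translation amount an integer, and positivity
modulo `a` together with integrality of the Cartan numbers makes the coefficient of `α` in a root
of `ℝα ⊕ ℝa` equal to `±1` or `±2`. The set `{m | α + ma ∈ R}` contains `0` and is stable under
the point reflections `m ↦ 2p - m` in its own elements, so it is `kℤ` for some `k`. If `2α + ma`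
is a root, then reflecting `α` in it gives the root `-(α + ma)`; hence `m = jk`, and `j` is odd
because `R` is reduced.
These `j` are stable under `j ↦ 4i - j` for all `i`, hence exhaust the odd integers or are absent.
-/

section Integers

variable {S : Set ℤ}

theorem neg_mem_of_two_mul_sub_mem (h0 : 0 ∈ S) (hS : ∀ m ∈ S, ∀ n ∈ S, 2 * m - n ∈ S)
    {n : ℤ} (hn : n ∈ S) : -n ∈ S := by
  simpa using hS 0 h0 n hn

theorem natAbs_mem_of_two_mul_sub_mem (h0 : 0 ∈ S) (hS : ∀ m ∈ S, ∀ n ∈ S, 2 * m - n ∈ S)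
    {n : ℤ} (hn : n ∈ S) : (n.natAbs : ℤ) ∈ S := by
  rcases Int.natAbs_eq n with h | h
  · rwa [← h]
  · rw [← neg_neg (n.natAbs : ℤ), ← h]
    exact neg_mem_of_two_mul_sub_mem h0 hS hn

theorem add_two_mul_mem_of_two_mul_sub_mem (h0 : 0 ∈ S)
    (hS : ∀ m ∈ S, ∀ n ∈ S, 2 * m - n ∈ S) {k n : ℤ} (hk : k ∈ S) (hn : n ∈ S) (j : ℤ) :
    n + 2 * k * j ∈ S := by
  have neg_mem : ∀ {n}, n ∈ S → -n ∈ S := neg_mem_of_two_mul_sub_mem h0 hS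
  induction j using Int.induction_on with
  | zero => simpa using hn
  | succ i ih => convert hS k hk _ (neg_mem ih) using 1; ring
  | pred i ih => convert hS (-k) (neg_mem hk) _ (neg_mem ih) using 1; ring

theorem exists_forall_mem_iff_dvd_of_two_mul_sub_mem (h0 : 0 ∈ S)
    (hS : ∀ m ∈ S, ∀ n ∈ S, 2 * m - n ∈ S) (hne : ∃ m ∈ S, m ≠ 0) :
    ∃ k : ℕ, 0 < k ∧ ∀ m, m ∈ S ↔ (k : ℤ) ∣ m := by
  classical
  have hex : ∃ k : ℕ, 0 < k ∧ (k : ℤ) ∈ S := by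
    obtain ⟨m, hm, hm0⟩ := hne
    exact ⟨m.natAbs, Int.natAbs_pos.2 hm0, natAbs_mem_of_two_mul_sub_mem h0 hS hm⟩
  obtain ⟨hk, hkS⟩ := Nat.find_spec hex
  have hmin : ∀ n : ℕ, 0 < n → (n : ℤ) ∈ S → Nat.find hex ≤ n :=
    fun n hn hnS => Nat.find_min' hex ⟨hn, hnS⟩
  set k := Nat.find hex
  refine ⟨k, hk, fun m => ⟨fun hm => ?_, ?_⟩⟩
  · -- The residue of `m` modulo `2k` in `[-k, k)` lies in `S`, so it is `0` or `-k`.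
    have hr := Int.bmod_add_bdiv m (2 * k)
    set r := m.bmod (2 * k)
    set d := m.bdiv (2 * k)
    push_cast at hr
    have hrS : r ∈ S := by
      convert add_two_mul_mem_of_two_mul_sub_mem h0 hS hkS hm (-d) using 1
      linarith
    have hr_lower : -((2 * k : ℕ) / 2 : ℤ) ≤ r := Int.le_bmod (by omega)
    have hr_upper : r < ((2 * k : ℕ) + 1) / 2 := Int.bmod_lt (by omega)
    have hr_cases : r = 0 ∨ r = -k := by
      by_contra! h
      have := hmin r.natAbs (Int.natAbs_pos.2 h.1)
        (natAbs_mem_of_two_mul_sub_mem h0 hS hrS)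
      omega
    rw [← hr]
    rcases hr_cases with h | h <;> rw [h]
    · exact ⟨2 * d, by ring⟩
    · exact ⟨2 * d - 1, by ring⟩
  · rintro ⟨j, rfl⟩
    rcases Int.even_or_odd' j with ⟨i, rfl | rfl⟩
    · convert add_two_mul_mem_of_two_mul_sub_mem h0 hS hkS h0 i using 1; ring
    · convert add_two_mul_mem_of_two_mul_sub_mem h0 hS hkS hkS i using 1; ring

theorem eq_empty_or_eq_setOf_odd_of_four_mul_sub_mem (hodd : ∀ j ∈ S, Odd j)
    (hS : ∀ i : ℤ, ∀ j ∈ S, 4 * i - j ∈ S) : S = ∅ ∨ S = {j | Odd j} := by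
  refine S.eq_empty_or_nonempty.imp_right fun ⟨j, hj⟩ => Set.Subset.antisymm hodd fun i hi => ?_
  have add_mem : ∀ q : ℤ, j + 4 * q ∈ S := fun q => by
    convert hS q _ (hS 0 j hj) using 1; ring
  obtain ⟨u, rfl⟩ : Odd i := hi
  obtain ⟨w, rfl⟩ := hodd j hj
  rcases Int.even_or_odd' (u - w) with ⟨q, hq | hq⟩
  · convert add_mem q using 1; omega
  · convert hS (w + q + 1) _ hj using 1; omega

end Integers

section Lattice

variable {K V : Type*} [Field K] [AddCommGroup V] [Module K V] {L : AddSubgroup V}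

theorem coe_eq_sum_repr_smul {ι : Type*} [Fintype ι] (b : Module.Basis ι ℤ L) (v : L) :
    (v : V) = ∑ i, (b.repr v i : K) • (b i : V) := by
  conv_lhs => rw [← b.sum_repr v]
  simp [Int.cast_smul_eq_zsmul, -Module.Basis.sum_repr]

theorem linearIndependent_coe_of_span_eq_top {ι : Type*} [Fintype ι]
    (b : Module.Basis ι ℤ L) (hspan : Submodule.span K (L : Set V) = ⊤)
    (hrank : Fintype.card ι = Module.finrank K V) :
    LinearIndependent K fun i => (b i : V) := by
  refine linearIndependent_of_top_le_span_of_card_eq_finrank ?_ hrank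
  rw [← hspan, Submodule.span_le]
  intro v hv
  have hrepr := coe_eq_sum_repr_smul (K := K) b ⟨v, hv⟩
  rw [SetLike.mem_coe, show v = _ from hrepr]
  exact Submodule.sum_mem _ fun i _ =>
    Submodule.smul_mem _ _ (Submodule.subset_span ⟨i, rfl⟩)

theorem exists_int_mul_eq_of_smul_mem [Module.Free ℤ L]
    [Module.Finite ℤ L] (hspan : Submodule.span K (L : Set V) = ⊤)
    (hrank : Module.finrank ℤ L = Module.finrank K V) {a : V} (ha : a ∈ L) (ha0 : a ≠ 0)
    {t : K} (ht : t • a ∈ L) : ∃ q p : ℤ, q ≠ 0 ∧ q * t = p := by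
  let b := Module.finBasis ℤ L
  have hli := linearIndependent_coe_of_span_eq_top b hspan (by rw [Fintype.card_fin, hrank])
  have hrepr := coe_eq_sum_repr_smul (K := K) b
  obtain ⟨i, hi⟩ : ∃ i, b.repr ⟨a, ha⟩ i ≠ 0 := by
    by_contra! h
    exact ha0 (by simpa [h] using hrepr ⟨a, ha⟩)
  refine ⟨b.repr ⟨a, ha⟩ i, b.repr ⟨t • a, ht⟩ i, hi, ?_⟩
  have hcoord : ∑ j, (t * (b.repr ⟨a, ha⟩ j : K) - b.repr ⟨t • a, ht⟩ j) • (b j : V) = 0 := by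
    simp only [sub_smul, mul_smul, Finset.sum_sub_distrib, ← Finset.smul_sum]
    rw [← hrepr ⟨a, ha⟩, ← hrepr ⟨t • a, ht⟩, sub_self]
  rw [mul_comm]
  exact sub_eq_zero.1 (Fintype.linearIndependent_iff.1 hli _ hcoord i)

end Lattice

section KGLine

variable {V : Type*} [AddCommGroup V] {a α : V} {k : ℕ} {g : Bool}

theorem neg_mem_kgLine {v : V} (hv : v ∈ kgLine a α k g) :
    -v ∈ kgLine a α k g := by
  rcases hv with ⟨ε, m, hε, rfl⟩ | ⟨hg, ε, m, hε, hm, rfl⟩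
  · exact Or.inl ⟨-ε, -m, by omega, by module⟩
  · exact Or.inr ⟨hg, -ε, -m, by omega, hm.neg, by module⟩

theorem eq_kgLine_of_forall_mem_iff {X : Set V}
    (hneg : ∀ v ∈ X, -v ∈ X)
    (hX : ∀ v ∈ X, ∃ c m : ℤ, (c = 1 ∨ c = 2) ∧
      (v = c • α + m • a ∨ v = -(c • α + m • a)))
    (hone : ∀ m : ℤ, α + m • a ∈ X ↔ (k : ℤ) ∣ m)
    (htwo : ∀ m : ℤ, (2 : ℤ) • α + m • a ∈ X ↔ g = true ∧ ∃ j, Odd j ∧ m = j * k) :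
    X = kgLine a α k g := by
  have hone_kgLine : ∀ m : ℤ, α + m • a ∈ X → α + m • a ∈ kgLine a α k g := fun m hm => by
    obtain ⟨j, rfl⟩ := (hone m).1 hm
    exact Or.inl ⟨1, j, Or.inl rfl, by module⟩
  have htwo_kgLine : ∀ m : ℤ, (2 : ℤ) • α + m • a ∈ X →
      (2 : ℤ) • α + m • a ∈ kgLine a α k g := fun m hm => by
    obtain ⟨hg, j, hj, rfl⟩ := (htwo m).1 hm
    exact Or.inr ⟨hg, 1, j, Or.inl rfl, hj, by module⟩
  have mem_kgLine : ∀ c m : ℤ, c = 1 ∨ c = 2 → c • α + m • a ∈ X →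
      c • α + m • a ∈ kgLine a α k g := by
    rintro c m (rfl | rfl)
    · simpa using hone_kgLine m
    · exact htwo_kgLine m
  apply Set.Subset.antisymm
  · intro v hv
    obtain ⟨c, m, hc, rfl | rfl⟩ := hX v hv
    · exact mem_kgLine c m hc hv
    · exact neg_mem_kgLine (mem_kgLine c m hc (neg_neg (c • α + m • a) ▸ hneg _ hv))
  · rintro v (⟨ε, m, rfl | rfl, rfl⟩ | ⟨hg, ε, m, rfl | rfl, hm, rfl⟩)
    · simpa using (hone (m * k)).2 ⟨m, mul_comm _ _⟩
    · convert hneg _ ((hone (-m * k)).2 ⟨-m, mul_comm _ _⟩) using 1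
      module
    · simpa using (htwo (m * k)).2 ⟨hg, m, hm, rfl⟩
    · convert hneg _ ((htwo (-m * k)).2 ⟨hg, -m, hm.neg, rfl⟩) using 1
      module

theorem add_zsmul_mem_kgLine_iff (hli : LinearIndependent ℤ ![α, a]) {m : ℤ} :
    α + m • a ∈ kgLine a α k g ↔ (k : ℤ) ∣ m := by
  constructor
  · rintro (⟨ε, j, -, h⟩ | ⟨-, ε, j, -, -, h⟩)
    · have := hli.eq_of_pair (s := 1) (by simpa using h)
      exact ⟨j, by rw [this.2, mul_comm]⟩
    · have := hli.eq_of_pair (s := 1) (by simpa using h)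
      omega
  · rintro ⟨j, rfl⟩
    exact Or.inl ⟨1, j, Or.inl rfl, by module⟩

theorem two_zsmul_add_mem_kgLine_iff (hli : LinearIndependent ℤ ![α, a]) :
    (2 : ℤ) • α + (k : ℤ) • a ∈ kgLine a α k g ↔ g = true := by
  constructor
  · rintro (⟨ε, j, hε, h⟩ | ⟨hg, -⟩)
    · have := hli.eq_of_pair h
      omega
    · exact hg
  · exact fun hg => Or.inr ⟨hg, 1, 1, Or.inl rfl, odd_one, by module⟩

theorem kgLine_injective (hli : LinearIndependent ℤ ![α, a]) :
    Function.Injective fun p : ℕ × Bool => kgLine a α p.1 p.2 := by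
  rintro ⟨k, g⟩ ⟨k', g'⟩ (h : kgLine a α k g = kgLine a α k' g')
  have hdvd : ∀ m : ℤ, (k : ℤ) ∣ m ↔ (k' : ℤ) ∣ m := fun m => by
    rw [← add_zsmul_mem_kgLine_iff hli, h, add_zsmul_mem_kgLine_iff hli]
  obtain rfl : k = k' := Nat.dvd_antisymm
    (Int.natCast_dvd_natCast.1 ((hdvd k').2 dvd_rfl))
    (Int.natCast_dvd_natCast.1 ((hdvd k).1 dvd_rfl))
  obtain rfl : g = g' := Bool.eq_iff_iff.2 <| by
    rw [← two_zsmul_add_mem_kgLine_iff hli, h, two_zsmul_add_mem_kgLine_iff hli]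
  rfl

end KGLine

section RootSystem

variable {V : Type*} [AddCommGroup V] [Module ℝ V] {B : LinearMap.BilinForm ℝ V}

theorem srefl_apply (B : LinearMap.BilinForm ℝ V) (u v : V) :
    srefl B u v = v - (2 * (B u u)⁻¹ * B u v) • u := by
  simp [srefl]

theorem srefl_quotForm_mkQ {W : Submodule ℝ V} (h₁ : ∀ w ∈ W, B w = 0)
    (h₂ : ∀ v : V, ∀ w ∈ W, B v w = 0) (u v : V) :
    srefl (quotForm W B h₁ h₂) (W.mkQ u) (W.mkQ v) = W.mkQ (srefl B u v) := by
  simp [srefl, quotForm]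

section Base

variable {R₀ P₀ : Set V} {m : ℕ}

theorem exists_pos_apply_of_mem_nnspan {β : V} (hβ : β ∈ nnspan P₀) (hpos : 0 < B β β) :
    ∃ α ∈ P₀, 0 < B α β := by
  by_contra! h
  suffices ∀ x ∈ nnspan P₀, B x β ≤ 0 from (this β hβ).not_gt hpos
  intro x hx
  induction hx using AddSubmonoid.closure_induction with
  | mem x hx => exact h x hx
  | zero => simp
  | add x y _ _ hx hy => simpa using add_nonpos hx hy

theorem exists_nat_repr_eq_of_mem_nnspan {ι : Type*} (b : Module.Basis ι ℝ V) {x : V}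
    (hx : x ∈ nnspan (Set.range b)) (i : ι) : ∃ n : ℕ, b.repr x i = n := by
  classical
  induction hx using AddSubmonoid.closure_induction with
  | mem x hx =>
    obtain ⟨j, rfl⟩ := hx
    exact ⟨if j = i then 1 else 0, by simp [Finsupp.single_apply]⟩
  | zero => exact ⟨0, by simp⟩
  | add x y _ _ hx hy =>
    obtain ⟨n, hn⟩ := hx
    obtain ⟨n', hn'⟩ := hy
    exact ⟨n + n', by simp [hn, hn']⟩

theorem exists_nat_sum_repr_eq_of_mem_nnspan {ι : Type*} [Fintype ι] (b : Module.Basis ι ℝ V)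
    {x : V} (hx : x ∈ nnspan (Set.range b)) : ∃ n : ℕ, ∑ i, b.repr x i = n := by
  choose n hn using exists_nat_repr_eq_of_mem_nnspan b hx
  exact ⟨∑ i, n i, by simp [hn]⟩

theorem eq_repr_smul_of_mem_nnspan_of_neg_mem_nnspan {ι : Type*} (b : Module.Basis ι ℝ V)
    {β : V} {i : ι} {c : ℝ} (hβ : β ∈ nnspan (Set.range b))
    (hγ : -(β - c • b i) ∈ nnspan (Set.range b)) : β = b.repr β i • b i := by
  refine b.ext_elem fun j => ?_
  rcases eq_or_ne i j with rfl | hij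
  · simp
  -- Away from `i`, the coordinates of the two vectors are nonnegative and opposite.
  obtain ⟨n, hn⟩ := exists_nat_repr_eq_of_mem_nnspan b hβ j
  obtain ⟨n', hn'⟩ := exists_nat_repr_eq_of_mem_nnspan b hγ j
  have hsum : (n' : ℝ) = -n := by simpa [hij, hn] using hn'.symm
  have hj : (n : ℝ) = 0 := by
    linarith [Nat.cast_nonneg (α := ℝ) n, Nat.cast_nonneg (α := ℝ) n']
  simp [hn, hj, hij]

theorem induction_of_mem_nnspan {ι : Type*} [Finite ι] (b : Module.Basis ι ℝ V)
    (hbR : ∀ i, b i ∈ R₀)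
    (hsign : ∀ β ∈ R₀, β ∈ nnspan (Set.range b) ∨ -β ∈ nnspan (Set.range b))
    (hpos : ∀ β ∈ R₀, 0 < B β β) (hrefl : ∀ i, ∀ β ∈ R₀, srefl B (b i) β ∈ R₀)
    {p : V → Prop} (hsmul : ∀ i (x : ℝ), x • b i ∈ R₀ → p (x • b i))
    (hstep : ∀ i, ∀ β ∈ R₀, p (srefl B (b i) β) → p β)
    {β : V} (hβ : β ∈ R₀) (hβ' : β ∈ nnspan (Set.range b)) : p β := by
  classical
  have := Fintype.ofFinite ι
  obtain ⟨N, hN⟩ := exists_nat_sum_repr_eq_of_mem_nnspan b hβ'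
  induction N using Nat.strong_induction_on generalizing β with
  | _ N ih =>
  obtain ⟨_, ⟨i, rfl⟩, hi⟩ := exists_pos_apply_of_mem_nnspan hβ' (hpos β hβ)
  have hγR := hrefl i β hβ
  have hγ := srefl_apply B (b i) β
  have hc : 0 < 2 * (B (b i) (b i))⁻¹ * B (b i) β := by
    have := hpos _ (hbR i)
    positivity
  set c := 2 * (B (b i) (b i))⁻¹ * B (b i) β
  set γ := srefl B (b i) β
  rcases hsign γ hγR with hγ' | hγ'
  · obtain ⟨N', hN'⟩ := exists_nat_sum_repr_eq_of_mem_nnspan b hγ'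
    have hsum : (N' : ℝ) = N - c := by
      simp [← hN', ← hN, hγ, Finset.sum_sub_distrib, Finsupp.single_apply]
    have hlt : N' < N := by
      have : (N' : ℝ) < N := by linarith
      exact_mod_cast this
    exact hstep i β hβ (ih N' hlt hγR hγ' hN')
  · have hβi := eq_repr_smul_of_mem_nnspan_of_neg_mem_nnspan b hβ' (hγ ▸ hγ')
    rw [hβi] at hβ ⊢
    exact hsmul i _ hβ

namespace IsBaseSet

theorem mem_or_neg_mem (h : IsBaseSet R₀ P₀ m) {β : V} (hβ : β ∈ R₀) :
    β ∈ nnspan P₀ ∨ -β ∈ nnspan P₀ := by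
  rw [h.2.2.2.2] at hβ
  exact hβ.imp And.right And.right

theorem exists_basis (h : IsBaseSet R₀ P₀ m) (hspan : Submodule.span ℝ R₀ = ⊤) :
    ∃ b : Module.Basis P₀ ℝ V, (∀ α, b α = α) ∧
      ∀ β ∈ R₀, β ∈ nnspan (Set.range b) ∨ -β ∈ nnspan (Set.range b) := by
  have nnspan_subset : nnspan P₀ ⊆ Submodule.span ℝ P₀ :=
    Submodule.closure_subset_span
  have top_le : ⊤ ≤ Submodule.span ℝ (Set.range ((↑) : P₀ → V)) := by
    rw [Subtype.range_coe, ← hspan, Submodule.span_le]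
    intro β hβ
    exact (h.mem_or_neg_mem hβ).elim (nnspan_subset ·) fun h => neg_mem_iff.1 (nnspan_subset h)
  refine ⟨Module.Basis.mk h.2.2.2.1 top_le, Module.Basis.mk_apply _ _, fun β hβ => ?_⟩
  rw [Module.Basis.coe_mk, Subtype.range_coe]
  exact h.mem_or_neg_mem hβ

theorem exists_int_of_smul_mem (h : IsBaseSet R₀ P₀ m) (hspan : Submodule.span ℝ R₀ = ⊤)
    {α : V} (hα : α ∈ P₀) {x : ℝ} (hx : x • α ∈ R₀) : ∃ c : ℤ, x = c := by
  obtain ⟨b, hb, hsign⟩ := h.exists_basis hspan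
  have hcoord : b.repr (x • α) ⟨α, hα⟩ = x := by
    have hα' : b.repr α = Finsupp.single ⟨α, hα⟩ 1 := by rw [← b.repr_self, hb]
    simp [hα']
  rcases hsign _ hx with hx | hx
  · obtain ⟨n, hn⟩ := exists_nat_repr_eq_of_mem_nnspan b hx ⟨α, hα⟩
    exact ⟨n, by rw [← hcoord, hn, Int.cast_natCast]⟩
  · obtain ⟨n, hn⟩ := exists_nat_repr_eq_of_mem_nnspan b hx ⟨α, hα⟩
    rw [map_neg, Finsupp.neg_apply, hcoord] at hn
    exact ⟨-n, by push_cast; linarith⟩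

theorem induction_of_srefl (h : IsBaseSet R₀ P₀ m) (hspan : Submodule.span ℝ R₀ = ⊤)
    (hpos : ∀ β ∈ R₀, 0 < B β β) (hneg : ∀ β ∈ R₀, -β ∈ R₀)
    (hrefl : ∀ α ∈ P₀, ∀ β ∈ R₀, srefl B α β ∈ R₀)
    {p : V → Prop} (hsmul : ∀ α ∈ P₀, ∀ x : ℝ, x • α ∈ R₀ → p (x • α))
    (hstep : ∀ α ∈ P₀, ∀ β ∈ R₀, p (srefl B α β) → p β) {β : V} (hβ : β ∈ R₀) : p β := by
  have := h.2.1.to_subtype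
  obtain ⟨b, hb, hsign⟩ := h.exists_basis hspan
  have hbR : ∀ α, b α ∈ R₀ := fun α => hb α ▸ h.1 α.2
  have hrefl' : ∀ α : P₀, ∀ β ∈ R₀, srefl B (b α) β ∈ R₀ := fun α => hb α ▸ hrefl α α.2
  rcases hsign β hβ with hβ' | hβ'
  · refine induction_of_mem_nnspan b hbR hsign hpos hrefl' (fun α => ?_) (fun α => ?_) hβ hβ'
    · exact hb α ▸ hsmul α α.2
    · exact hb α ▸ hstep α α.2
  · rw [← neg_neg β]
    refine induction_of_mem_nnspan (p := fun γ => p (-γ)) b hbR hsign hpos hrefl'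
      (fun α x hx => ?_) (fun α γ hγ hp => ?_) (hneg β hβ) hβ'
    · rw [hb] at hx ⊢
      have := hneg _ hx
      rw [← neg_smul] at this ⊢
      exact hsmul α α.2 (-x) this
    · rw [hb, ← map_neg] at hp
      exact hstep α α.2 (-γ) (hneg γ hγ) hp

end IsBaseSet

end Base

variable {R P : Set V} {l n : ℕ} {a : V}

namespace IsEARS

theorem apply_self_pos (hE : IsEARS B R l n) {α : V} (hα : α ∈ R) : 0 < B α α :=
  (hE.posSemidef α).lt_of_ne' (hE.root_nonisotropic α hα)

theorem apply_eq_zero (hE : IsEARS B R l n) (ha : B a a = 0) : B a = 0 := by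
  have : a ∈ nullSet B := ha
  rwa [hE.null_eq] at this

theorem apply_right_eq_zero (hE : IsEARS B R l n) (ha : B a a = 0) (v : V) : B v a = 0 := by
  rw [hE.symm, hE.apply_eq_zero ha, LinearMap.zero_apply]

theorem apply_add_zsmul_add_zsmul (hE : IsEARS B R l n) (ha : B a a = 0) (u v : V) (p q : ℤ) :
    B (u + p • a) (v + q • a) = B u v := by
  simp [hE.apply_eq_zero ha, hE.apply_right_eq_zero ha]

theorem span_image_mkQ_eq_top (hE : IsEARS B R l n) (W : Submodule ℝ V) :
    Submodule.span ℝ (W.mkQ '' R) = ⊤ := by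
  rw [Submodule.span_image, hE.span_eq_top, Submodule.map_top, Submodule.range_mkQ]

theorem srefl_mem (hE : IsEARS B R l n) {α β : V} (hα : α ∈ R) (hβ : β ∈ R) :
    srefl B α β ∈ R := by
  rw [← hE.reflect α hα]
  exact ⟨β, hβ, rfl⟩

theorem sub_zsmul_mem (hE : IsEARS B R l n) {α β : V} (hα : α ∈ R) (hβ : β ∈ R) {c : ℤ}
    (hc : 2 * B α β = c * B α α) : β - c • α ∈ R := by
  have hα0 := hE.root_nonisotropic α hα
  have hc' : 2 * (B α α)⁻¹ * B α β = c := by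
    field_simp
    linarith
  simpa [srefl_apply, hc', Int.cast_smul_eq_zsmul] using hE.srefl_mem hα hβ

theorem neg_mem (hE : IsEARS B R l n) {α : V} (hα : α ∈ R) : -α ∈ R := by
  convert hE.sub_zsmul_mem hα hα (c := 2) (by norm_num) using 1
  module

theorem zsmul_sub_mem (hE : IsEARS B R l n) {α β : V} (hα : α ∈ R) (hβ : β ∈ R) {c : ℤ}
    (hc : 2 * B α β = c * B α α) : c • α - β ∈ R :=
  neg_sub β (c • α) ▸ hE.neg_mem (hE.sub_zsmul_mem hα hβ hc)

theorem zsmul_add_reflect_mem (hE : IsEARS B R l n) (ha : B a a = 0) {α : V} {c p q : ℤ}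
    (hp : α + p • a ∈ R) (hq : c • α + q • a ∈ R) : c • α + (2 * c * p - q) • a ∈ R := by
  convert hE.zsmul_sub_mem hp hq (c := 2 * c) ?_ using 1
  · module
  · rw [hE.apply_add_zsmul_add_zsmul ha, hE.apply_add_zsmul_add_zsmul ha, map_zsmul, zsmul_eq_mul]
    push_cast
    ring

theorem add_zsmul_mem_of_two_zsmul_add_mem (hE : IsEARS B R l n) (ha : B a a = 0) {α : V}
    (hα : α ∈ R) {m : ℤ} (h : (2 : ℤ) • α + m • a ∈ R) : α + m • a ∈ R := by
  convert hE.zsmul_sub_mem h hα (c := 1) ?_ using 1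
  · module
  · simp [hE.apply_eq_zero ha, hE.apply_right_eq_zero ha]

/-- Composing the reflections in `x` and `x + m • a` translates `y` by a multiple of `a`,
nontrivially as soon as `y` is not orthogonal to `x`; so nontrivial translations spread along
the connected set `R`. -/
theorem exists_add_zsmul_mem (hE : IsEARS B R l n) (ha : B a a = 0)
    (hne : ∃ β ∈ R, ∃ m : ℤ, m ≠ 0 ∧ β + m • a ∈ R) :
    ∀ β ∈ R, ∃ m : ℤ, m ≠ 0 ∧ β + m • a ∈ R := by
  suffices {β ∈ R | ∃ m : ℤ, m ≠ 0 ∧ β + m • a ∈ R} = R from fun β hβ => (this ▸ hβ).2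
  by_contra hS
  obtain ⟨x, ⟨hx, m, hm, hxm⟩, y, ⟨hy, hyS⟩, hxy⟩ :=
    hE.connected _ (Set.sep_subset _ _) hne hS
  obtain ⟨c, hc⟩ := hE.integral x hx y hy
  have hc0 : c ≠ 0 := by
    rintro rfl
    simp [hxy] at hc
  refine hyS ⟨hy, c * m, mul_ne_zero hc0 hm, ?_⟩
  have hc' : 2 * B (x + m • a) (y - c • x) = (-c : ℤ) * B (x + m • a) (x + m • a) := by
    have hmove : B (x + m • a) (y - c • x) = B x (y - c • x) := by
      simpa using hE.apply_add_zsmul_add_zsmul ha x (y - c • x) m 0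
    rw [hmove, hE.apply_add_zsmul_add_zsmul ha, map_sub, map_zsmul, zsmul_eq_mul]
    push_cast
    linarith
  convert hE.sub_zsmul_mem hxm (hE.sub_zsmul_mem hx hy hc) hc' using 1
  module

theorem exists_forall_add_zsmul_mem_iff (hE : IsEARS B R l n) (ha : B a a = 0) {α : V}
    (hα : α ∈ R) (hne : ∃ m : ℤ, m ≠ 0 ∧ α + m • a ∈ R) :
    ∃ k : ℕ, 0 < k ∧ ∀ m : ℤ, α + m • a ∈ R ↔ (k : ℤ) ∣ m := by
  refine exists_forall_mem_iff_dvd_of_two_mul_sub_mem (S := {m | α + m • a ∈ R})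
    (by simpa using hα) (fun p hp q hq => ?_) (hne.imp fun _ => And.symm)
  simpa using hE.zsmul_add_reflect_mem ha hp (c := 1) (by simpa using hq)

theorem exists_forall_two_zsmul_add_mem_iff (hE : IsEARS B R l n) (hred : IsReducedRS R)
    (ha : B a a = 0) {α : V} (hα : α ∈ R) {k : ℕ}
    (hkα : ∀ m : ℤ, α + m • a ∈ R ↔ (k : ℤ) ∣ m) :
    ∃ g : Bool, ∀ m : ℤ, (2 : ℤ) • α + m • a ∈ R ↔ g = true ∧ ∃ j, Odd j ∧ m = j * k := by
  have dvd_of_mem : ∀ m : ℤ, (2 : ℤ) • α + m • a ∈ R → (k : ℤ) ∣ m := fun m hm =>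
    (hkα m).1 (hE.add_zsmul_mem_of_two_zsmul_add_mem ha hα hm)
  have odd_of_mem : ∀ j : ℤ, (2 : ℤ) • α + (j * k) • a ∈ R → Odd j := by
    intro j hj
    by_contra hodd
    obtain ⟨i, rfl⟩ := Int.not_odd_iff_even.1 hodd
    refine hred _ ((hkα (i * k)).2 ⟨i, mul_comm _ _⟩) ?_
    convert hj using 1
    module
  have hmem : ∀ m : ℤ, (2 : ℤ) • α + m • a ∈ R ↔
      ∃ j ∈ {j : ℤ | (2 : ℤ) • α + (j * k) • a ∈ R}, m = j * k := by
    intro m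
    refine ⟨fun hm => ?_, ?_⟩
    · obtain ⟨j, rfl⟩ := dvd_of_mem m hm
      rw [mul_comm] at hm ⊢
      exact ⟨j, hm, rfl⟩
    · rintro ⟨j, hj, rfl⟩
      exact hj
  have reflect_mem : ∀ i j : ℤ, (2 : ℤ) • α + (j * k) • a ∈ R →
      (2 : ℤ) • α + ((4 * i - j) * k) • a ∈ R := by
    intro i j hj
    convert hE.zsmul_add_reflect_mem ha ((hkα (i * k)).2 ⟨i, mul_comm _ _⟩) hj using 3
    ring
  rcases eq_empty_or_eq_setOf_odd_of_four_mul_sub_mem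
    (S := {j : ℤ | (2 : ℤ) • α + (j * k) • a ∈ R}) odd_of_mem reflect_mem with hD | hD
  · exact ⟨false, fun m => (hmem m).trans (by rw [hD]; simp)⟩
  · exact ⟨true, fun m => (hmem m).trans (by rw [hD]; simp)⟩

end IsEARS

namespace IsFundamentalSet

theorem subset (hfs : IsFundamentalSet B R l P a) : P ⊆ R :=
  hfs.2.2.2.1

theorem apply_self_eq_zero (hfs : IsFundamentalSet B R l P a) : B a a = 0 :=
  hfs.2.1

theorem isBaseSet (hfs : IsFundamentalSet B R l P a) :
    IsBaseSet ((Submodule.span ℝ {a}).mkQ '' R) ((Submodule.span ℝ {a}).mkQ '' P) (l + 1) :=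
  hfs.2.2.2.2.2.2

theorem ne_zero (hfs : IsFundamentalSet B R l P a) : a ≠ 0 := by
  obtain ⟨-, -, ⟨b, -, -, -, hli⟩, -⟩ := hfs
  rintro rfl
  exact one_ne_zero (hli 1 0 (by simp)).1

theorem linearIndependent_pair (hE : IsEARS B R l n) (hfs : IsFundamentalSet B R l P a) {α : V}
    (hα : α ∈ R) : LinearIndependent ℤ ![α, a] := by
  refine LinearIndependent.pair_iff.2 fun s t h => ?_
  have hs : s = 0 := by
    simpa [hE.apply_right_eq_zero hfs.apply_self_eq_zero, hE.root_nonisotropic α hα]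
      using congrArg (B α) h
  refine ⟨hs, ?_⟩
  have ht : (t : ℝ) • a = 0 := by simpa [hs, Int.cast_smul_eq_zsmul] using h
  exact_mod_cast (smul_eq_zero.1 ht).resolve_right hfs.ne_zero

theorem exists_int_of_smul_mem (hE : IsEARS B R l 2) (hfs : IsFundamentalSet B R l P a) {t : ℝ}
    (ht : t • a ∈ zspan R) : ∃ m : ℤ, t = m := by
  have ha0 := hfs.ne_zero
  have hBa := hE.apply_eq_zero hfs.apply_self_eq_zero
  obtain ⟨haR, -, ⟨b, -, -, hnull, hli⟩, -⟩ := hfs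
  obtain ⟨m, k, hmk⟩ : t • a ∈ {v | ∃ m k : ℤ, v = m • a + k • b} :=
    hnull ▸ ⟨ht, by simp [nullSet, hBa]⟩
  have := hE.findim
  have := hE.free
  have : Module.Finite ℤ (zspan R) := Module.finite_of_finrank_pos (by rw [hE.rank_eq]; omega)
  have hspan : Submodule.span ℝ (zspan R : Set V) = ⊤ := by
    rw [eq_top_iff, ← hE.span_eq_top]
    exact Submodule.span_mono AddSubgroup.subset_closure
  obtain ⟨q, p, hq, hqt⟩ := exists_int_mul_eq_of_smul_mem hspan
    (hE.rank_eq.trans hE.dim_eq.symm) haR ha0 ht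
  have hk : k = 0 := by
    have h0 : (q * m - p) • a + (q * k) • b = 0 := by
      have : (q : ℝ) • t • a = (p : ℝ) • a := by rw [smul_smul, hqt]
      rw [hmk, Int.cast_smul_eq_zsmul, Int.cast_smul_eq_zsmul] at this
      rw [sub_smul, ← sub_eq_zero.2 this]
      module
    exact (mul_eq_zero.1 (hli _ _ h0).2).resolve_left hq
  refine ⟨m, smul_left_injective ℝ ha0 ?_⟩
  simpa [hk, Int.cast_smul_eq_zsmul] using hmk

theorem dvd_two_of_zsmul_add_zsmul_mem (hE : IsEARS B R l n) (hfs : IsFundamentalSet B R l P a)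
    {α : V} (hα : α ∈ R) {c m : ℤ} (hv : c • α + m • a ∈ R) : c ∣ 2 := by
  have ha := hfs.apply_self_eq_zero
  obtain ⟨d, hd⟩ := hE.integral _ hv α hα
  have hd' : (2 * c : ℝ) * B α α = (d * c * c : ℝ) * B α α := by
    simpa [hE.apply_eq_zero ha, hE.apply_right_eq_zero ha, mul_assoc] using hd
  have hdc : 2 * c = d * c * c := by
    exact_mod_cast mul_right_cancel₀ (hE.root_nonisotropic α hα) hd'
  have hc : c ≠ 0 := by
    rintro rfl
    exact hE.root_nonisotropic _ hv (by simp [hE.apply_eq_zero ha])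
  exact ⟨d, by rw [mul_right_cancel₀ hc hdc, mul_comm]⟩

theorem exists_zsmul_add_of_mem_span_pair (hE : IsEARS B R l 2) (hfs : IsFundamentalSet B R l P a)
    {α : V} (hα : α ∈ P) {v : V} (hv : v ∈ R ∩ (Submodule.span ℝ {α, a} : Set V)) :
    ∃ c m : ℤ, (c = 1 ∨ c = 2) ∧ (v = c • α + m • a ∨ v = -(c • α + m • a)) := by
  have hαR := hfs.subset hα
  obtain ⟨hvR, hv⟩ := hv
  obtain ⟨x, y, rfl⟩ := Submodule.mem_span_pair.1 hv
  have hx : x • (Submodule.span ℝ {a}).mkQ α ∈ (Submodule.span ℝ {a}).mkQ '' R :=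
    ⟨_, hvR, by simp⟩
  obtain ⟨c, rfl⟩ := hfs.isBaseSet.exists_int_of_smul_mem (hE.span_image_mkQ_eq_top _)
    ⟨α, hα, rfl⟩ hx
  rw [Int.cast_smul_eq_zsmul] at hvR ⊢
  have hy : y • a ∈ zspan R := by
    rw [← add_sub_cancel_left (c • α) (y • a)]
    exact sub_mem (AddSubgroup.subset_closure hvR)
      (zsmul_mem (AddSubgroup.subset_closure hαR) c)
  obtain ⟨m, rfl⟩ := hfs.exists_int_of_smul_mem hE hy
  rw [Int.cast_smul_eq_zsmul] at hvR ⊢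
  have hc : c = 1 ∨ c = 2 ∨ c = -1 ∨ c = -2 := by
    have hc2 := hfs.dvd_two_of_zsmul_add_zsmul_mem hE hαR hvR
    have := Int.le_of_dvd two_pos hc2
    have := Int.le_of_dvd two_pos (neg_dvd.2 hc2)
    have : c ≠ 0 := by
      rintro rfl
      simp at hc2
    omega
  rcases hc with hc | hc | hc | hc
  · exact ⟨c, m, Or.inl hc, Or.inl rfl⟩
  · exact ⟨c, m, Or.inr hc, Or.inl rfl⟩
  · exact ⟨-c, -m, by omega, Or.inr (by module)⟩
  · exact ⟨-c, -m, by omega, Or.inr (by module)⟩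

theorem subset_span_of_forall_inter_span_pair_subset (hE : IsEARS B R l n)
    (hfs : IsFundamentalSet B R l P a)
    (h : ∀ α ∈ P, R ∩ (Submodule.span ℝ {α, a} : Set V) ⊆ Submodule.span ℝ P) :
    R ⊆ Submodule.span ℝ P := by
  set π := (Submodule.span ℝ {a}).mkQ
  have ha := hfs.apply_self_eq_zero
  have h₁ : ∀ w ∈ Submodule.span ℝ {a}, B w = 0 := fun w hw => by
    obtain ⟨t, rfl⟩ := Submodule.mem_span_singleton.1 hw
    rw [map_smul, hE.apply_eq_zero ha, smul_zero]
  have h₂ : ∀ v, ∀ w ∈ Submodule.span ℝ {a}, B v w = 0 := fun v w hw => by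
    rw [hE.symm, h₁ w hw, LinearMap.zero_apply]
  have hrefl : ∀ u v, srefl (quotForm _ B h₁ h₂) (π u) (π v) = π (srefl B u v) :=
    srefl_quotForm_mkQ h₁ h₂
  intro β hβ
  refine hfs.isBaseSet.induction_of_srefl (B := quotForm _ B h₁ h₂)
    (p := fun x => ∀ β ∈ R, π β = x → β ∈ Submodule.span ℝ P)
    (hE.span_image_mkQ_eq_top _) ?_ ?_ ?_ ?_ ?_ ⟨β, hβ, rfl⟩ β hβ rfl
  · rintro _ ⟨γ, hγ, rfl⟩
    exact hE.apply_self_pos hγ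
  · rintro _ ⟨γ, hγ, rfl⟩
    exact ⟨-γ, hE.neg_mem hγ, map_neg _ _⟩
  · rintro _ ⟨α, hα, rfl⟩ _ ⟨γ, hγ, rfl⟩
    exact ⟨_, hE.srefl_mem (hfs.subset hα) hγ, (hrefl α γ).symm⟩
  · rintro _ ⟨α, hα, rfl⟩ x - γ hγ hγx
    obtain ⟨y, hy⟩ := Submodule.mem_span_singleton.1
      ((Submodule.Quotient.eq _).1 (hγx.trans (map_smul π x α).symm))
    exact h α hα ⟨hγ, Submodule.mem_span_pair.2 ⟨x, y, by rw [hy, add_sub_cancel]⟩⟩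
  · rintro _ ⟨α, hα, rfl⟩ _ ⟨γ, -, rfl⟩ hp δ hδ hδγ
    have hmem := hp (srefl B α δ) (hE.srefl_mem (hfs.subset hα) hδ) (by rw [← hδγ, hrefl])
    rw [srefl_apply] at hmem
    exact (Submodule.sub_mem_iff_left _
      (Submodule.smul_mem _ _ (Submodule.subset_span hα))).1 hmem

theorem not_subset_span (hE : IsEARS B R l n) (hfs : IsFundamentalSet B R l P a) (hn : 2 ≤ n) :
    ¬R ⊆ Submodule.span ℝ P := by
  intro h
  obtain ⟨-, -, -, -, hfin, hcard, -⟩ := hfs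
  have := hfin.fintype
  have hspan : Submodule.span ℝ P = ⊤ := by
    rw [eq_top_iff, ← hE.span_eq_top]
    exact Submodule.span_le.2 h
  have hle := finrank_span_le_card (R := ℝ) P
  rw [hspan, finrank_top, hE.dim_eq, ← Set.ncard_eq_toFinset_card', hcard] at hle
  omega

theorem exists_add_zsmul_mem (hE : IsEARS B R l 2) (hfs : IsFundamentalSet B R l P a) :
    ∃ β ∈ R, ∃ m : ℤ, m ≠ 0 ∧ β + m • a ∈ R := by
  by_contra! hno
  have eq_zero : ∀ β ∈ R, ∀ m : ℤ, β + m • a ∈ R → m = 0 := fun β hβ m hm =>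
    not_not.1 fun hm0 => hno β hβ m hm0 hm
  refine hfs.not_subset_span hE le_rfl
    (hfs.subset_span_of_forall_inter_span_pair_subset hE fun α hα v hv => ?_)
  have hαR := hfs.subset hα
  have mem_span : ∀ c m : ℤ, c = 1 ∨ c = 2 → c • α + m • a ∈ R →
      c • α + m • a ∈ Submodule.span ℝ P := by
    intro c m hc hR
    obtain rfl : m = 0 := by
      rcases hc with rfl | rfl
      · exact eq_zero α hαR m (one_zsmul α ▸ hR)
      · exact eq_zero α hαR m
          (hE.add_zsmul_mem_of_two_zsmul_add_mem hfs.apply_self_eq_zero hαR hR)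
    rw [zero_smul, add_zero]
    exact zsmul_mem (Submodule.subset_span hα) c
  obtain ⟨c, m, hc, rfl | rfl⟩ := hfs.exists_zsmul_add_of_mem_span_pair hE hα hv
  · exact mem_span c m hc hv.1
  · exact neg_mem (mem_span c m hc (neg_neg (c • α + m • a) ▸ hE.neg_mem hv.1))

theorem exists_inter_span_pair_eq_kgLine (hE : IsEARS B R l 2) (hred : IsReducedRS R)
    (hfs : IsFundamentalSet B R l P a) {α : V} (hα : α ∈ P) :
    ∃ (k : ℕ) (g : Bool), 0 < k ∧ R ∩ (Submodule.span ℝ {α, a} : Set V) = kgLine a α k g := by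
  have hαR := hfs.subset hα
  have ha := hfs.apply_self_eq_zero
  obtain ⟨k, hk, hone⟩ := hE.exists_forall_add_zsmul_mem_iff ha hαR
    (hE.exists_add_zsmul_mem ha (hfs.exists_add_zsmul_mem hE) α hαR)
  obtain ⟨g, htwo⟩ := hE.exists_forall_two_zsmul_add_mem_iff hred ha hαR hone
  have mem_span : ∀ c m : ℤ, c • α + m • a ∈ (Submodule.span ℝ {α, a} : Set V) := fun c m =>
    add_mem (zsmul_mem (Submodule.mem_span_of_mem (by simp)) c)
      (zsmul_mem (Submodule.mem_span_of_mem (by simp)) m)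
  refine ⟨k, g, hk, eq_kgLine_of_forall_mem_iff
    (fun v hv => ⟨hE.neg_mem hv.1, neg_mem hv.2⟩)
    (fun v hv => hfs.exists_zsmul_add_of_mem_span_pair hE hα hv) (fun m => ?_) (fun m => ?_)⟩
  · rw [← hone, Set.mem_inter_iff, and_iff_left]
    simpa using mem_span 1 m
  · rw [← htwo, Set.mem_inter_iff, and_iff_left (mem_span 2 m)]

end IsFundamentalSet

end RootSystem

/-- Existence and uniqueness of the maps `k` and `g` attached to a
fundamental-set of a reduced elliptic root system. -/
theorem stmt8 {V : Type*} [AddCommGroup V] [Module ℝ V]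
    (B : LinearMap.BilinForm ℝ V) (R : Set V) (l : ℕ)
    (hE : IsEARS B R l 2) (hred : IsReducedRS R)
    (P : Set V) (a : V) (hfs : IsFundamentalSet B R l P a) :
    ∀ α ∈ P, ∃! p : ℕ × Bool, 0 < p.1 ∧
      R ∩ (Submodule.span ℝ {α, a} : Set V) = kgLine a α p.1 p.2 := by
  intro α hα
  obtain ⟨k, g, hk, hR⟩ := hfs.exists_inter_span_pair_eq_kgLine hE hred hα
  refine ⟨(k, g), ⟨hk, hR⟩, fun p hp => ?_⟩
  exact kgLine_injective (hfs.linearIndependent_pair hE (hfs.subset hα)) (hp.2.symm.trans hR)
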